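/- arXiv:2011.13977 — 2 statements merged into one kernel-verified Lean document; each statement's English description precedes it below -/
import Mathlib

section
/- Let I be an instance with n ≥ 8 agents and n objects and let v be a unit-sum valuation profile consistent with I. Set t_1 = 1/n^{1/3} and t_i = 1/(min{i, n^{1/3}}·n^{2/3}) for 2 ≤ i ≤ n, and set k = ⌊n^{1/3}/2⌋. Let μ_MM be obtained from a maximum-weight matching of G_I under the weights assigning to each edge e = (a_i, h_j) of rank r the weight t_r if v_i(h_j) ≥ t_r and 0 otherwise, by deleting all edges of weight 0. Let μ'_aux be a matching of G_I containing the maximum possible number of edges of rank at most k, let X' be the set of edges of μ'_aux of rank at most k, and let μ_aux be the set of edges (a, h) of μ'_aux such that neither a nor h occurs in an edge of μ_MM. If μ_MM contains no rank-1 edge, then SW(μ_MM | v) + SW(μ_aux | v) ≥ |X'|/(2n). -/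
open Finset
open scoped Classical

/-- A one-sided matching instance with `n` agents and `n` objects.  Agent `i` has a
nonempty acceptable set `accept i` and a weak order `pref i` on it
(`pref i h h'` means agent `i` weakly prefers object `h` to object `h'`). -/
structure OSMInstance (n : ℕ) where
  accept : Fin n → Finset (Fin n)
  accept_nonempty : ∀ i, (accept i).Nonempty
  pref : Fin n → Fin n → Fin n → Prop
  pref_refl : ∀ i h, h ∈ accept i → pref i h h
  pref_trans : ∀ i h₁ h₂ h₃, h₁ ∈ accept i → h₂ ∈ accept i → h₃ ∈ accept i →
    pref i h₁ h₂ → pref i h₂ h₃ → pref i h₁ h₃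
  pref_total : ∀ i h₁ h₂, h₁ ∈ accept i → h₂ ∈ accept i → pref i h₁ h₂ ∨ pref i h₂ h₁

namespace OSMInstance

variable {n : ℕ}

/-- Agent `i` strictly prefers object `h` to object `h'`. -/
def strictPref (I : OSMInstance n) (i h h' : Fin n) : Prop :=
  I.pref i h h' ∧ ¬ I.pref i h' h

/-- The rank of the edge `(i, h)` of `G_I`: one plus the number of acceptable objects
that agent `i` strictly prefers to `h`. -/
noncomputable def edgeRank (I : OSMInstance n) (e : Fin n × Fin n) : ℕ :=
  ((I.accept e.1).filter (fun h' => I.strictPref e.1 h' e.2)).card + 1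

/-- A matching of `G_I`: a set of acceptable (agent, object) pairs in which every agent
and every object occurs at most once. -/
def IsMatching (I : OSMInstance n) (μ : Finset (Fin n × Fin n)) : Prop :=
  (∀ e ∈ μ, e.2 ∈ I.accept e.1) ∧
  (∀ e ∈ μ, ∀ e' ∈ μ, e.1 = e'.1 → e = e') ∧
  (∀ e ∈ μ, ∀ e' ∈ μ, e.2 = e'.2 → e = e')

/-- Total weight of a set of edges under the edge weights `w`. -/
def weightSum (w : Fin n × Fin n → ℝ) (μ : Finset (Fin n × Fin n)) : ℝ :=
  ∑ e ∈ μ, w e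

/-- Social welfare of the set of edges `μ` under the valuation profile `v`. -/
def SW (_I : OSMInstance n) (v : Fin n → Fin n → ℝ) (μ : Finset (Fin n × Fin n)) : ℝ :=
  ∑ e ∈ μ, v e.1 e.2

/-- `μ` is a maximum-weight matching of `G_I` with respect to edge weights `w`. -/
def IsMaxWeightMatching (I : OSMInstance n) (w : Fin n × Fin n → ℝ)
    (μ : Finset (Fin n × Fin n)) : Prop :=
  I.IsMatching μ ∧ ∀ μ', I.IsMatching μ' → weightSum w μ' ≤ weightSum w μ

/-- `μ` is a priority-`p` matching: a maximum-weight matching when every rank-`r` edge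
gets weight `p r`. -/
noncomputable def IsPriorityMatching (I : OSMInstance n) (p : ℕ → ℝ)
    (μ : Finset (Fin n × Fin n)) : Prop :=
  I.IsMaxWeightMatching (fun e => p (I.edgeRank e)) μ

/-- `v` is a valuation profile consistent with the instance: values lie in `[0,1]`,
unacceptable objects have value `0`, and on acceptable objects the values represent
the weak order. -/
def Consistent (I : OSMInstance n) (v : Fin n → Fin n → ℝ) : Prop :=
  (∀ i h, 0 ≤ v i h ∧ v i h ≤ 1) ∧
  (∀ i h, h ∉ I.accept i → v i h = 0) ∧
  (∀ i h h', h ∈ I.accept i → h' ∈ I.accept i → (I.pref i h h' ↔ v i h' ≤ v i h))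

/-- Unit-sum valuations: each agent's values over acceptable objects sum to `1`. -/
def UnitSum (I : OSMInstance n) (v : Fin n → Fin n → ℝ) : Prop :=
  ∀ i, ∑ h ∈ I.accept i, v i h = 1

/-- Unit-range valuations: each agent values some acceptable object `1`, some
acceptable object `0`, and has two non-equivalent acceptable objects. -/
def UnitRange (I : OSMInstance n) (v : Fin n → Fin n → ℝ) : Prop :=
  ∀ i, (∃ h ∈ I.accept i, v i h = 1) ∧ (∃ h ∈ I.accept i, v i h = 0) ∧
    ∃ h ∈ I.accept i, ∃ h' ∈ I.accept i, I.strictPref i h h'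

/-- Agent `i` is unmatched in `μ`. -/
def Unmatched (_I : OSMInstance n) (μ : Finset (Fin n × Fin n)) (i : Fin n) : Prop :=
  ∀ h, (i, h) ∉ μ

/-- Agent `i` weakly prefers their allocation in `μ'` to their allocation in `μ`
(being unmatched is strictly worse than receiving any acceptable object). -/
def WeakImprove (I : OSMInstance n) (μ' μ : Finset (Fin n × Fin n)) (i : Fin n) : Prop :=
  I.Unmatched μ i ∨ ∃ h h', (i, h) ∈ μ ∧ (i, h') ∈ μ' ∧ I.pref i h' h

/-- Agent `i` strictly prefers their allocation in `μ'` to their allocation in `μ`. -/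
def StrictImprove (I : OSMInstance n) (μ' μ : Finset (Fin n × Fin n)) (i : Fin n) : Prop :=
  (I.Unmatched μ i ∧ ∃ h', (i, h') ∈ μ') ∨
    ∃ h h', (i, h) ∈ μ ∧ (i, h') ∈ μ' ∧ I.strictPref i h' h

/-- `μ` is a Pareto optimal matching of `G_I`. -/
def ParetoOptimal (I : OSMInstance n) (μ : Finset (Fin n × Fin n)) : Prop :=
  I.IsMatching μ ∧
    ¬ ∃ μ', I.IsMatching μ' ∧ (∀ i, I.WeakImprove μ' μ i) ∧ ∃ i, I.StrictImprove μ' μ i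

/-- `sig I μ r` is the number of rank-`r` edges of `μ` (as an integer). -/
noncomputable def sig (I : OSMInstance n) (μ : Finset (Fin n × Fin n)) (r : ℕ) : ℤ :=
  ((μ.filter (fun e => I.edgeRank e = r)).card : ℤ)

end OSMInstance

/-- Lexicographic comparison `f ≤ g` of the length-`len` tuples `(f 0, …, f (len-1))`
and `(g 0, …, g (len-1))`. -/
def LexLe (len : ℕ) (f g : ℕ → ℤ) : Prop :=
  (∀ j < len, f j = g j) ∨ ∃ j < len, (∀ i < j, f i = g i) ∧ f j < g j

namespace OSMInstance

variable {n : ℕ}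

/-- `μ` is a rank-maximal matching: it lexicographically maximizes `(s_1, …, s_n)`. -/
noncomputable def RankMaximal (I : OSMInstance n) (μ : Finset (Fin n × Fin n)) : Prop :=
  I.IsMatching μ ∧ ∀ μ', I.IsMatching μ' →
    LexLe n (fun j => I.sig μ' (j + 1)) (fun j => I.sig μ (j + 1))

/-- `μ` is a max-cardinality rank-maximal matching: it lexicographically maximizes
`(Σ_i s_i, s_1, …, s_n)`. -/
noncomputable def MaxCardRankMaximal (I : OSMInstance n) (μ : Finset (Fin n × Fin n)) : Prop :=
  I.IsMatching μ ∧ ∀ μ', I.IsMatching μ' →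
    LexLe (n + 1) (fun j => if j = 0 then (μ'.card : ℤ) else I.sig μ' j)
      (fun j => if j = 0 then (μ.card : ℤ) else I.sig μ j)

/-- `μ` is a fair matching: it lexicographically maximizes
`(Σ_i s_i, -s_n, -s_(n-1), …, -s_1)`. -/
noncomputable def FairMatching (I : OSMInstance n) (μ : Finset (Fin n × Fin n)) : Prop :=
  I.IsMatching μ ∧ ∀ μ', I.IsMatching μ' →
    LexLe (n + 1) (fun j => if j = 0 then (μ'.card : ℤ) else -I.sig μ' (n + 1 - j))
      (fun j => if j = 0 then (μ.card : ℤ) else -I.sig μ (n + 1 - j))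

end OSMInstance

/-- The priority vector for rank-maximal matchings: a rank-`r` edge gets weight
`n ^ (2 * (n - r + 1))`. -/
noncomputable def pRankMaximal (n : ℕ) : ℕ → ℝ :=
  fun r => (n : ℝ) ^ (2 * (n - r + 1))

/-- The priority vector for max-cardinality rank-maximal matchings: a rank-`r` edge gets
weight `n ^ (2 * n) + n ^ (2 * (n - r))`. -/
noncomputable def pMaxCardRankMaximal (n : ℕ) : ℕ → ℝ :=
  fun r => (n : ℝ) ^ (2 * n) + (n : ℝ) ^ (2 * (n - r))

/-- The priority vector for fair matchings: a rank-`r` edge gets weight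
`4 * n ^ (2 * n) - 2 * n ^ (r - 1)`. -/
noncomputable def pFairVec (n : ℕ) : ℕ → ℝ :=
  fun r => 4 * (n : ℝ) ^ (2 * n) - 2 * (n : ℝ) ^ (r - 1)

/-- The set `𝕡` of the three priority vectors of interest. -/
noncomputable def PrioritySet (n : ℕ) : Set (ℕ → ℝ) :=
  {pRankMaximal n, pMaxCardRankMaximal n, pFairVec n}

/-- The four matching properties considered: Pareto optimal, rank-maximal,
max-cardinality rank-maximal, and fair. -/
inductive MatchProp where
  | po | rm | mcrm | fair

/-- `μ` satisfies the property `X` with respect to the instance `I`. -/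
noncomputable def SatisfiesProp {n : ℕ} (X : MatchProp) (I : OSMInstance n)
    (μ : Finset (Fin n × Fin n)) : Prop :=
  match X with
  | .po => I.ParetoOptimal μ
  | .rm => I.RankMaximal μ
  | .mcrm => I.MaxCardRankMaximal μ
  | .fair => I.FairMatching μ

/-!
An agent whose object of rank at most `k` is worth less than `1 / (2 n)` puts more than half of its
unit value on fewer than `k` better objects, so its favourite object is worth at least
`1 / (2 k) ≥ t 1`. If `μ_MM` left this agent unmatched, handing it that favourite would gain weight
`t 1` and cost at most one edge of `μ_MM`, which weighs less because its rank is not `1`; this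
contradicts maximality. So each edge of `X'` untouched by `μ_MM` is worth at least `1 / (2 n)`,
while each edge of `μ_MM` is worth at least `1 / n` and touches at most two edges of `X'`.
-/

section EdgesAvoiding

variable {α β : Type*} [DecidableEq α] [DecidableEq β]

/-- The edges of `μ` with no endpoint in common with an edge of `ν`. The auxiliary matching
`μ_aux` is `edgesAvoiding μ'_aux μ_MM`. -/
def edgesAvoiding (μ ν : Finset (α × β)) : Finset (α × β) :=
  μ.filter (fun e => ∀ e' ∈ ν, e.1 ≠ e'.1 ∧ e.2 ≠ e'.2)

lemma mem_edgesAvoiding {μ ν : Finset (α × β)} {e : α × β} :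
    e ∈ edgesAvoiding μ ν ↔ e ∈ μ ∧ ∀ e' ∈ ν, e.1 ≠ e'.1 ∧ e.2 ≠ e'.2 :=
  mem_filter

lemma edgesAvoiding_subset_edgesAvoiding {μ μ' : Finset (α × β)} (hμ : μ ⊆ μ')
    (ν : Finset (α × β)) : edgesAvoiding μ ν ⊆ edgesAvoiding μ' ν :=
  filter_subset_filter _ hμ

lemma subset_edgesAvoiding_union (μ ν : Finset (α × β)) :
    μ ⊆ edgesAvoiding μ ν ∪ (μ.filter (fun e => e.1 ∈ ν.image Prod.fst) ∪
      μ.filter (fun e => e.2 ∈ ν.image Prod.snd)) := by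
  intro e he
  simp only [mem_edgesAvoiding, mem_union, mem_filter, mem_image]
  grind

lemma card_le_card_edgesAvoiding_add {μ : Finset (α × β)}
    (hfst : Set.InjOn Prod.fst (μ : Set (α × β))) (hsnd : Set.InjOn Prod.snd (μ : Set (α × β)))
    (ν : Finset (α × β)) : μ.card ≤ (edgesAvoiding μ ν).card + 2 * ν.card := by
  have hcard_fst : (μ.filter (fun e => e.1 ∈ ν.image Prod.fst)).card ≤ ν.card :=
    (card_le_card_of_injOn Prod.fst (fun e he => (mem_filter.1 he).2)
      (hfst.mono (filter_subset _ μ))).trans card_image_le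
  have hcard_snd : (μ.filter (fun e => e.2 ∈ ν.image Prod.snd)).card ≤ ν.card :=
    (card_le_card_of_injOn Prod.snd (fun e he => (mem_filter.1 he).2)
      (hsnd.mono (filter_subset _ μ))).trans card_image_le
  calc μ.card
      ≤ (edgesAvoiding μ ν).card + ((μ.filter (fun e => e.1 ∈ ν.image Prod.fst)).card +
          (μ.filter (fun e => e.2 ∈ ν.image Prod.snd)).card) :=
        (card_le_card (subset_edgesAvoiding_union μ ν)).trans <|
          (card_union_le _ _).trans <| by gcongr; exact card_union_le _ _
    _ ≤ (edgesAvoiding μ ν).card + 2 * ν.card := by lia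

end EdgesAvoiding

namespace OSMInstance

section Matchings

variable {n : ℕ} {I : OSMInstance n} {μ ν : Finset (Fin n × Fin n)} {w : Fin n × Fin n → ℝ}
  {a h : Fin n}

lemma IsMatching.subset (hμ : I.IsMatching μ) (hνμ : ν ⊆ μ) : I.IsMatching ν :=
  ⟨fun e he => hμ.1 e (hνμ he), fun e he e' he' => hμ.2.1 e (hνμ he) e' (hνμ he'),
    fun e he e' he' => hμ.2.2 e (hνμ he) e' (hνμ he')⟩

lemma isMatching_iff_injOn : I.IsMatching μ ↔ (∀ e ∈ μ, e.2 ∈ I.accept e.1) ∧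
    Set.InjOn Prod.fst (μ : Set (Fin n × Fin n)) ∧ Set.InjOn Prod.snd (μ : Set (Fin n × Fin n)) :=
  ⟨fun hμ => ⟨hμ.1, fun e he e' he' => hμ.2.1 e he e' he', fun e he e' he' => hμ.2.2 e he e' he'⟩,
    fun hμ => ⟨hμ.1, fun _ he _ he' => hμ.2.1 he he', fun _ he _ he' => hμ.2.2 he he'⟩⟩

lemma IsMatching.insert_filter_snd_ne (hμ : I.IsMatching μ) (ha : I.Unmatched μ a)
    (hh : h ∈ I.accept a) : I.IsMatching (insert (a, h) (μ.filter (fun e => e.2 ≠ h))) := by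
  have hnotMem : (a, h) ∉ μ.filter (fun e => e.2 ≠ h) := fun hmem => ha h (mem_filter.1 hmem).1
  obtain ⟨hacc, hfst, hsnd⟩ :=
    isMatching_iff_injOn.1 (hμ.subset (filter_subset (fun e => e.2 ≠ h) μ))
  rw [isMatching_iff_injOn, coe_insert, Set.injOn_insert (mt mem_coe.1 hnotMem),
    Set.injOn_insert (mt mem_coe.1 hnotMem)]
  refine ⟨(forall_mem_insert _ _ _).2 ⟨hh, hacc⟩, ⟨hfst, ?_⟩, ⟨hsnd, ?_⟩⟩
  · rintro ⟨⟨_, h'⟩, he, rfl⟩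
    exact ha h' (mem_filter.1 he).1
  · rintro ⟨_, he, heh⟩
    exact (mem_filter.1 he).2 heh

lemma IsMaxWeightMatching.filter_ne_zero (hμ : I.IsMaxWeightMatching w μ) :
    I.IsMaxWeightMatching w (μ.filter (fun e => w e ≠ 0)) :=
  ⟨hμ.1.subset (filter_subset _ _),
    fun μ' hμ' => (hμ.2 μ' hμ').trans_eq (sum_filter_ne_zero μ).symm⟩

lemma IsMaxWeightMatching.weight_le_sum_filter_snd_eq (hμ : I.IsMaxWeightMatching w μ)
    (ha : I.Unmatched μ a) (hh : h ∈ I.accept a) :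
    w (a, h) ≤ ∑ e ∈ μ.filter (fun e => e.2 = h), w e := by
  have hle := hμ.2 _ (hμ.1.insert_filter_snd_ne ha hh)
  unfold weightSum at hle
  rw [sum_insert fun hmem => ha h (mem_filter.1 hmem).1,
    ← sum_filter_add_sum_filter_not μ (fun e => e.2 = h)] at hle
  exact le_of_add_le_add_right hle

lemma IsMaxWeightMatching.exists_weight_le (hμ : I.IsMaxWeightMatching w μ)
    (ha : I.Unmatched μ a) (hh : h ∈ I.accept a) (hpos : 0 < w (a, h)) :
    ∃ e ∈ μ, e.2 = h ∧ w (a, h) ≤ w e := by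
  have hle := hμ.weight_le_sum_filter_snd_eq ha hh
  obtain ⟨e, he⟩ : (μ.filter (fun e => e.2 = h)).Nonempty := by
    by_contra! hempty
    rw [hempty, sum_empty] at hle
    exact hpos.not_ge hle
  obtain ⟨heμ, heh⟩ := mem_filter.1 he
  have hunique : μ.filter (fun e => e.2 = h) = {e} :=
    eq_singleton_iff_unique_mem.2 ⟨he, fun e' he' =>
      hμ.1.2.2 e' (mem_filter.1 he').1 e heμ ((mem_filter.1 he').2.trans heh.symm)⟩
  exact ⟨e, heμ, heh, by rwa [hunique, sum_singleton] at hle⟩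

end Matchings

section Valuations

variable {n : ℕ} {I : OSMInstance n} {v : Fin n → Fin n → ℝ} {μ ν : Finset (Fin n × Fin n)}
  {a h : Fin n}

lemma two_le_edgeRank_of_ne_one {e : Fin n × Fin n} (hrank : I.edgeRank e ≠ 1) :
    2 ≤ I.edgeRank e :=
  (Nat.two_le_iff _).2 ⟨Nat.succ_ne_zero _, hrank⟩

lemma edgeRank_le (hh : h ∈ I.accept a) : I.edgeRank (a, h) ≤ n :=
  (Nat.succ_le_of_lt <| card_lt_card <| filter_ssubset.2 ⟨h, hh, fun hs => hs.2 hs.1⟩).trans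
    (card_finset_fin_le _)

lemma Consistent.strictPref_iff (hv : I.Consistent v) {h' : Fin n} (hh : h ∈ I.accept a)
    (hh' : h' ∈ I.accept a) : I.strictPref a h h' ↔ v a h' < v a h := by
  rw [strictPref, hv.2.2 a h h' hh hh', hv.2.2 a h' h hh' hh, lt_iff_le_not_ge]

lemma Consistent.edgeRank_eq_one (hv : I.Consistent v) (hh : h ∈ I.accept a)
    (hmax : ∀ h' ∈ I.accept a, v a h' ≤ v a h) : I.edgeRank (a, h) = 1 := by
  rw [edgeRank, filter_eq_empty_iff.2, card_empty]
  exact fun h' hh' hs => (hmax h' hh').not_gt ((hv.strictPref_iff hh' hh).1 hs)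

lemma UnitSum.one_le_edgeRank_sub_one_mul_add (hus : I.UnitSum v) (hv : I.Consistent v)
    (hh : h ∈ I.accept a) {M : ℝ} (hM : ∀ h' ∈ I.accept a, v a h' ≤ M) :
    1 ≤ ((I.edgeRank (a, h) : ℝ) - 1) * M + n * v a h := by
  set better := (I.accept a).filter (fun h' => I.strictPref a h' h)
  set others := (I.accept a).filter (fun h' => ¬ I.strictPref a h' h)
  have hbetter : ∑ h' ∈ better, v a h' ≤ better.card * M := by
    rw [← nsmul_eq_mul]
    exact sum_le_card_nsmul _ _ _ fun h' hh' => hM h' (mem_filter.1 hh').1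
  have hothers : ∑ h' ∈ others, v a h' ≤ others.card * v a h := by
    rw [← nsmul_eq_mul]
    refine sum_le_card_nsmul _ _ _ fun h' hh' => ?_
    obtain ⟨hacc, hns⟩ := mem_filter.1 hh'
    exact not_lt.1 fun hlt => hns ((hv.strictPref_iff hacc hh).2 hlt)
  calc 1 = ∑ h' ∈ better, v a h' + ∑ h' ∈ others, v a h' := by
        rw [sum_filter_add_sum_filter_not, hus a]
    _ ≤ better.card * M + others.card * v a h := add_le_add hbetter hothers
    _ ≤ ((I.edgeRank (a, h) : ℝ) - 1) * M + n * v a h := by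
        have hcard : (others.card : ℝ) ≤ n := mod_cast card_finset_fin_le others
        have hrank : (I.edgeRank (a, h) : ℝ) - 1 = better.card := by simp [edgeRank, better]
        rw [hrank]
        gcongr
        exact (hv.1 a h).1

lemma UnitSum.half_lt_edgeRank_sub_one_mul (hus : I.UnitSum v) (hv : I.Consistent v)
    (hh : h ∈ I.accept a) {M : ℝ} (hM : ∀ h' ∈ I.accept a, v a h' ≤ M)
    (hlow : v a h < 1 / (2 * n)) : 1 / 2 < ((I.edgeRank (a, h) : ℝ) - 1) * M := by
  have hn : (0 : ℝ) < n := by exact_mod_cast h.pos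
  have hlow' : n * v a h < 1 / 2 := by
    calc n * v a h < n * (1 / (2 * n)) := by gcongr
      _ = 1 / 2 := by field_simp
  linarith [hus.one_le_edgeRank_sub_one_mul_add hv hh hM]

lemma card_mul_le_SW {c : ℝ} (hc : ∀ e ∈ μ, c ≤ v e.1 e.2) : μ.card * c ≤ I.SW v μ := by
  rw [← nsmul_eq_mul]
  exact card_nsmul_le_sum _ _ _ hc

lemma Consistent.SW_le_SW (hv : I.Consistent v) (hμν : μ ⊆ ν) : I.SW v μ ≤ I.SW v ν :=
  sum_le_sum_of_subset_of_nonneg hμν fun e _ _ => (hv.1 e.1 e.2).1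

end Valuations

section ThresholdWeight

variable {n : ℕ} {I : OSMInstance n} {v : Fin n → Fin n → ℝ} {t : ℕ → ℝ} {e : Fin n × Fin n}

/-- The edge weights defining `μ_MM`: an edge of rank `r` weighs `t r` if its value clears that
threshold, and `0` otherwise. -/
noncomputable def thresholdWeight (I : OSMInstance n) (v : Fin n → Fin n → ℝ) (t : ℕ → ℝ)
    (e : Fin n × Fin n) : ℝ :=
  if t (I.edgeRank e) ≤ v e.1 e.2 then t (I.edgeRank e) else 0

lemma thresholdWeight_of_le (h : t (I.edgeRank e) ≤ v e.1 e.2) :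
    I.thresholdWeight v t e = t (I.edgeRank e) :=
  if_pos h

lemma le_value_of_thresholdWeight_ne_zero (h : I.thresholdWeight v t e ≠ 0) :
    t (I.edgeRank e) ≤ v e.1 e.2 :=
  not_not.1 fun hlt => h (if_neg hlt)

end ThresholdWeight

end OSMInstance

section AdmissibleThresholds

open OSMInstance

/-- What the argument needs of the thresholds `t_1, …, t_n` and the rank bound `k`: clearing any
`t_r` is worth at least `1 / n`, `t_1` is the strictly largest threshold, and it is at most
`1 / (2 k)` (stated without division, so that nothing is asked when `k = 0`). -/
structure AdmissibleThresholds (n k : ℕ) (t : ℕ → ℝ) : Prop where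
  one_div_le : ∀ r, 2 ≤ r → r ≤ n → 1 / (n : ℝ) ≤ t r
  lt_first : ∀ r, 2 ≤ r → r ≤ n → t r < t 1
  two_mul_mul_first_le : 2 * k * t 1 ≤ 1

lemma admissibleThresholds_of_cbrt {n k : ℕ} {t : ℕ → ℝ}
    (ht1 : t 1 = 1 / (n : ℝ) ^ ((1 : ℝ) / 3))
    (ht : ∀ i, 2 ≤ i → i ≤ n →
      t i = 1 / (min (i : ℝ) ((n : ℝ) ^ ((1 : ℝ) / 3)) * (n : ℝ) ^ ((2 : ℝ) / 3)))
    (hk : (k : ℝ) ≤ (n : ℝ) ^ ((1 : ℝ) / 3) / 2) : AdmissibleThresholds n k t where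
  one_div_le r hr hrn := by
    have hn : (0 : ℝ) < n := by exact_mod_cast (by lia : 0 < n)
    rw [ht r hr hrn]
    refine one_div_le_one_div_of_le (by positivity) ?_
    calc min (r : ℝ) ((n : ℝ) ^ ((1 : ℝ) / 3)) * (n : ℝ) ^ ((2 : ℝ) / 3)
        ≤ (n : ℝ) ^ ((1 : ℝ) / 3) * (n : ℝ) ^ ((2 : ℝ) / 3) := by gcongr; exact min_le_right _ _
      _ = n := by rw [← Real.rpow_add hn]; norm_num
  lt_first r hr hrn := by
    have hn : (1 : ℝ) < n := by exact_mod_cast (by lia : 1 < n)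
    have hmin : 1 < min (r : ℝ) ((n : ℝ) ^ ((1 : ℝ) / 3)) :=
      lt_min (by exact_mod_cast hr) (Real.one_lt_rpow hn (by norm_num))
    rw [ht r hr hrn, ht1]
    refine one_div_lt_one_div_of_lt (by positivity) ?_
    calc (n : ℝ) ^ ((1 : ℝ) / 3) ≤ (n : ℝ) ^ ((2 : ℝ) / 3) :=
          Real.rpow_le_rpow_of_exponent_le hn.le (by norm_num)
      _ < min (r : ℝ) ((n : ℝ) ^ ((1 : ℝ) / 3)) * (n : ℝ) ^ ((2 : ℝ) / 3) :=
          lt_mul_of_one_lt_left (by positivity) hmin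
  two_mul_mul_first_le := by
    rw [ht1, mul_one_div]
    exact div_le_one_of_le₀ (by linarith) (by positivity)

variable {n k : ℕ} {I : OSMInstance n} {v : Fin n → Fin n → ℝ} {t : ℕ → ℝ} {e : Fin n × Fin n}

lemma AdmissibleThresholds.first_pos (ht : AdmissibleThresholds n k t) (hn : 2 ≤ n) : 0 < t 1 :=
  (one_div_nonneg.2 n.cast_nonneg).trans_lt <|
    (ht.one_div_le 2 le_rfl hn).trans_lt (ht.lt_first 2 le_rfl hn)

lemma AdmissibleThresholds.one_div_le_value (ht : AdmissibleThresholds n k t)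
    (hacc : e.2 ∈ I.accept e.1) (hrank : I.edgeRank e ≠ 1)
    (hw : I.thresholdWeight v t e ≠ 0) : 1 / (n : ℝ) ≤ v e.1 e.2 :=
  (ht.one_div_le _ (two_le_edgeRank_of_ne_one hrank) (edgeRank_le hacc)).trans
    (le_value_of_thresholdWeight_ne_zero hw)

lemma AdmissibleThresholds.thresholdWeight_lt_first (ht : AdmissibleThresholds n k t)
    (hacc : e.2 ∈ I.accept e.1) (hrank : I.edgeRank e ≠ 1)
    (hw : I.thresholdWeight v t e ≠ 0) : I.thresholdWeight v t e < t 1 := by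
  rw [thresholdWeight_of_le (le_value_of_thresholdWeight_ne_zero hw)]
  exact ht.lt_first _ (two_le_edgeRank_of_ne_one hrank) (edgeRank_le hacc)

lemma AdmissibleThresholds.exists_thresholdWeight_eq_first (ht : AdmissibleThresholds n k t)
    (hv : I.Consistent v) (hus : I.UnitSum v) {a h : Fin n} (hh : h ∈ I.accept a)
    (hrank : I.edgeRank (a, h) ≤ k) (hlow : v a h < 1 / (2 * n)) :
    ∃ h₁ ∈ I.accept a, 0 < I.thresholdWeight v t (a, h₁) ∧
      I.thresholdWeight v t (a, h₁) = t 1 := by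
  obtain ⟨h₁, hh₁, hmax⟩ := exists_max_image (I.accept a) (v a) (I.accept_nonempty a)
  have hhalf := hus.half_lt_edgeRank_sub_one_mul hv hh hmax hlow
  have hrank_ne : I.edgeRank (a, h) ≠ 1 := by
    intro hone
    norm_num [hone] at hhalf
  have hv₁ : t 1 ≤ v a h₁ := by
    have hrank_le : (I.edgeRank (a, h) : ℝ) - 1 ≤ k := by
      have : (I.edgeRank (a, h) : ℝ) ≤ k := by exact_mod_cast hrank
      linarith
    have hk : (0 : ℝ) < k := by exact_mod_cast (Nat.succ_pos _).trans_le hrank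
    refine le_of_mul_le_mul_left ?_ hk
    calc k * t 1 ≤ 1 / 2 := by linarith [ht.two_mul_mul_first_le]
      _ ≤ ((I.edgeRank (a, h) : ℝ) - 1) * v a h₁ := hhalf.le
      _ ≤ k * v a h₁ := mul_le_mul_of_nonneg_right hrank_le (hv.1 a h₁).1
  have hweight : I.thresholdWeight v t (a, h₁) = t 1 := by
    have hrank₁ := hv.edgeRank_eq_one hh₁ hmax
    rw [thresholdWeight_of_le (hrank₁.symm ▸ hv₁), hrank₁]
  have hn : 2 ≤ n := (two_le_edgeRank_of_ne_one hrank_ne).trans (edgeRank_le hh)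
  exact ⟨h₁, hh₁, hweight ▸ ht.first_pos hn, hweight⟩

lemma AdmissibleThresholds.one_div_two_mul_le_value_of_unmatched (ht : AdmissibleThresholds n k t)
    (hv : I.Consistent v) (hus : I.UnitSum v) {μ : Finset (Fin n × Fin n)}
    (hμ : I.IsMaxWeightMatching (I.thresholdWeight v t) μ)
    (hne : ∀ e ∈ μ, I.thresholdWeight v t e ≠ 0) (hrank : ∀ e ∈ μ, I.edgeRank e ≠ 1)
    {a h : Fin n} (ha : I.Unmatched μ a) (hh : h ∈ I.accept a) (hk : I.edgeRank (a, h) ≤ k) :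
    1 / (2 * n) ≤ v a h := by
  by_contra! hlow
  obtain ⟨h₁, hh₁, hpos, hweight⟩ := ht.exists_thresholdWeight_eq_first hv hus hh hk hlow
  obtain ⟨e, he, -, hle⟩ := hμ.exists_weight_le ha hh₁ hpos
  exact (ht.thresholdWeight_lt_first (hμ.1.1 e he) (hrank e he) (hne e he)).not_ge (hweight ▸ hle)

end AdmissibleThresholds

theorem aux_welfare_bound_norank1_general {n k : ℕ} {I : OSMInstance n} {v : Fin n → Fin n → ℝ}
    (hv : I.Consistent v) (hus : I.UnitSum v) {t : ℕ → ℝ} (ht : AdmissibleThresholds n k t)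
    {μMM : Finset (Fin n × Fin n)} (hMM : I.IsMaxWeightMatching (I.thresholdWeight v t) μMM)
    (hne : ∀ e ∈ μMM, I.thresholdWeight v t e ≠ 0) (hrank : ∀ e ∈ μMM, I.edgeRank e ≠ 1)
    {μ : Finset (Fin n × Fin n)} (hμ : I.IsMatching μ) :
    ((μ.filter (fun e => I.edgeRank e ≤ k)).card : ℝ) / (2 * n) ≤
      I.SW v μMM + I.SW v (edgesAvoiding μ μMM) := by
  set X := μ.filter (fun e => I.edgeRank e ≤ k)
  have hXμ : X ⊆ μ := filter_subset _ _
  have hXm : I.IsMatching X := hμ.subset hXμ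
  have hcard : (X.card : ℝ) ≤ (edgesAvoiding X μMM).card + 2 * μMM.card :=
    have ⟨_, hfst, hsnd⟩ := OSMInstance.isMatching_iff_injOn.1 hXm
    mod_cast card_le_card_edgesAvoiding_add hfst hsnd μMM
  have hSW : μMM.card * (1 / (n : ℝ)) ≤ I.SW v μMM :=
    OSMInstance.card_mul_le_SW fun e he =>
      ht.one_div_le_value (hMM.1.1 e he) (hrank e he) (hne e he)
  have hSW_avoiding : (edgesAvoiding X μMM).card * (1 / (2 * n : ℝ)) ≤
      I.SW v (edgesAvoiding X μMM) := by
    refine OSMInstance.card_mul_le_SW fun e he => ?_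
    obtain ⟨heX, havoid⟩ := mem_edgesAvoiding.1 he
    exact ht.one_div_two_mul_le_value_of_unmatched hv hus hMM hne hrank
      (fun h' hmem => (havoid _ hmem).1 rfl) (hXm.1 e heX) (mem_filter.1 heX).2
  calc (X.card : ℝ) / (2 * n)
      ≤ ((edgesAvoiding X μMM).card + 2 * μMM.card) / (2 * n) := by gcongr
    _ = μMM.card * (1 / n) + (edgesAvoiding X μMM).card * (1 / (2 * n)) := by ring
    _ ≤ I.SW v μMM + I.SW v (edgesAvoiding X μMM) := add_le_add hSW hSW_avoiding
    _ ≤ I.SW v μMM + I.SW v (edgesAvoiding μ μMM) := by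
        gcongr
        exact hv.SW_le_SW (edgesAvoiding_subset_edgesAvoiding hXμ μMM)

/-- if the filtered maximum-weight matching contains no rank-1 edge, then
together with the auxiliary matching (for ranks up to `k = ⌊n^(1/3)/2⌋`) its welfare is
at least `|X'| / (2n)`, for unit-sum valuations and `n ≥ 8`. -/
theorem aux_welfare_bound_norank1 {n : ℕ} (hn : 8 ≤ n) (I : OSMInstance n)
    (v : Fin n → Fin n → ℝ) (hv : I.Consistent v) (hus : I.UnitSum v)
    (t : ℕ → ℝ) (ht1 : t 1 = 1 / (n : ℝ) ^ ((1 : ℝ) / 3))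
    (ht : ∀ i, 2 ≤ i → i ≤ n →
      t i = 1 / (min (i : ℝ) ((n : ℝ) ^ ((1 : ℝ) / 3)) * (n : ℝ) ^ ((2 : ℝ) / 3)))
    (k : ℕ) (hk : k = ⌊(n : ℝ) ^ ((1 : ℝ) / 3) / 2⌋₊)
    (w : Fin n × Fin n → ℝ)
    (hw : ∀ e, w e = if t (I.edgeRank e) ≤ v e.1 e.2 then t (I.edgeRank e) else 0)
    (μ₀ : Finset (Fin n × Fin n)) (hμ₀ : I.IsMaxWeightMatching w μ₀)
    (μMM : Finset (Fin n × Fin n)) (hμMM : μMM = μ₀.filter (fun e => w e ≠ 0))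
    (μaux' : Finset (Fin n × Fin n)) (haux' : I.IsMatching μaux')
    (hauxmax : ∀ μ'', I.IsMatching μ'' →
      (μ''.filter (fun e => I.edgeRank e ≤ k)).card ≤
        (μaux'.filter (fun e => I.edgeRank e ≤ k)).card)
    (X' : Finset (Fin n × Fin n)) (hX' : X' = μaux'.filter (fun e => I.edgeRank e ≤ k))
    (μaux : Finset (Fin n × Fin n))
    (hμaux : μaux = μaux'.filter (fun e => ∀ e' ∈ μMM, e.1 ≠ e'.1 ∧ e.2 ≠ e'.2))
    (hnorank1 : ¬ ∃ e ∈ μMM, I.edgeRank e = 1) :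
    (X'.card : ℝ) / (2 * n) ≤ I.SW v μMM + I.SW v μaux := by
  obtain rfl : μaux = edgesAvoiding μaux' μMM := by ext; simp [hμaux, mem_edgesAvoiding]
  obtain rfl : w = I.thresholdWeight v t := funext hw
  subst hμMM hX'
  exact aux_welfare_bound_norank1_general hv hus
    (admissibleThresholds_of_cbrt ht1 ht (hk ▸ Nat.floor_le (by positivity)))
    hμ₀.filter_ne_zero (fun e he => (mem_filter.1 he).2)
    (fun e he hone => hnorank1 ⟨e, he, hone⟩) haux'
end

section
/- There exists a constant C > 0 such that for every n ≥ 2 and every instance I with n agents and n objects, the following two statements hold. (i) There exist a threshold matrix T assigning to each pair (a_i, h_j) a value T(a_i, h_j) ∈ [0,1] and an outcome map f from {0,1}-valued n×n answer matrices to matchings of G_I, such that for every unit-range valuation profile v consistent with I, letting b_v(i,j) = 1 iff v_i(h_j) ≥ T(a_i, h_j), the matching f(b_v) is Pareto optimal and SW(μ* | v) ≤ C·√n·SW(f(b_v) | v), where μ* is a Pareto optimal matching of maximum social welfare under v. (ii) For every p ∈ 𝕡 there exist such T and f for which f(b_v) is a priority-p matching and SW(μ* | v) ≤ C·√n·SW(f(b_v)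 | v), where μ* is a priority-p matching of maximum social welfare under v. -/
open Finset
open scoped Classical

/-!
Ask about every edge with the threshold `1 / √n` and return, among the admissible Pareto optimal
matchings, one with the most positively answered edges. Negatively answered edges contribute at
most `n · (1 / √n) = √n` to the welfare of any matching, and positively answered edges contribute
at least `1 / √n` each to the welfare of the output, so the optimum is at most `√n` times the
welfare of the output plus an additive `√n`. The additive term is absorbed because every Pareto
optimal matching gives some agent a favourite object, and hence has welfare at least `1`:
otherwise let every agent point at the owner of a favourite object; either some favourite is free,
or the pointers contain a cycle, and in both cases a trade improves the matching. Priority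
matchings are covered because a Pareto improvement increases any edge weight that is positive and
respects the preferences.
-/

section ThresholdSums

variable {ι R : Type*} [Semiring R] [LinearOrder R] [IsOrderedRing R] {s : Finset ι} {u : ι → R}

theorem card_filter_mul_le_sum (hu : ∀ x ∈ s, 0 ≤ u x) (θ : R) :
    #{x ∈ s | θ ≤ u x} * θ ≤ ∑ x ∈ s, u x :=
  calc #{x ∈ s | θ ≤ u x} * θ
      = #{x ∈ s | θ ≤ u x} • θ := (nsmul_eq_mul _ _).symm
    _ ≤ ∑ x ∈ s with θ ≤ u x, u x := card_nsmul_le_sum _ _ _ fun _ hx => (mem_filter.1 hx).2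
    _ ≤ ∑ x ∈ s, u x := sum_le_sum_of_subset_of_nonneg (filter_subset _ _) fun x hx _ => hu x hx

theorem sum_le_card_filter_add_card_mul {θ : R} (hθ : 0 ≤ θ) (hu : ∀ x ∈ s, u x ≤ 1) :
    ∑ x ∈ s, u x ≤ #{x ∈ s | θ ≤ u x} + #s * θ :=
  calc ∑ x ∈ s, u x
      ≤ ∑ x ∈ s, ((if θ ≤ u x then 1 else 0) + θ) := by
        refine sum_le_sum fun x hx => ?_
        split_ifs with h
        · exact (hu x hx).trans (le_add_of_nonneg_right hθ)
        · rw [zero_add]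
          exact (not_le.1 h).le
    _ = #{x ∈ s | θ ≤ u x} + #s * θ := by
        rw [sum_add_distrib, ← natCast_card_filter, sum_const, nsmul_eq_mul]

end ThresholdSums

theorem periodicPts_nonempty {α : Type*} [Finite α] [Nonempty α] (g : α → α) :
    (Function.periodicPts g).Nonempty := by
  let x : α := Classical.arbitrary α
  obtain ⟨a, b, hab, heq⟩ := Set.finite_univ.exists_lt_map_eq_of_forall_mem
    (f := fun k : ℕ => g^[k] x) fun _ => Set.mem_univ _
  refine ⟨g^[a] x, Function.mk_mem_periodicPts (Nat.sub_pos_of_lt hab) ?_⟩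
  rw [Function.IsPeriodicPt, Function.IsFixedPt, ← Function.iterate_add_apply,
    Nat.sub_add_cancel hab.le]
  exact heq.symm

namespace OSMInstance

variable {n : ℕ} {I : OSMInstance n} {μ μ' : Finset (Fin n × Fin n)} {i h h' : Fin n}
  {v : Fin n → Fin n → ℝ}

section Matchings

theorem isMatching_empty : I.IsMatching ∅ := by
  simp [IsMatching]

theorem IsMatching.injOn_fst (hμ : I.IsMatching μ) :
    Set.InjOn Prod.fst (μ : Set (Fin n × Fin n)) :=
  fun e he e' he' => hμ.2.1 e he e' he'

theorem IsMatching.injOn_snd (hμ : I.IsMatching μ) :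
    Set.InjOn Prod.snd (μ : Set (Fin n × Fin n)) :=
  fun e he e' he' => hμ.2.2 e he e' he'

theorem IsMatching.card_le (hμ : I.IsMatching μ) : #μ ≤ n := by
  simpa using card_le_card_of_injOn Prod.fst (fun _ _ => mem_univ _) hμ.injOn_fst

variable (I) in
theorem unmatched_or_exists_mem (μ : Finset (Fin n × Fin n)) (i : Fin n) :
    I.Unmatched μ i ∨ ∃ h, (i, h) ∈ μ := by
  simpa only [Unmatched, ← not_exists] using (em (∃ h, (i, h) ∈ μ)).symm

variable (I) in
theorem exists_isMaxWeightMatching (w : Fin n × Fin n → ℝ) : ∃ μ, I.IsMaxWeightMatching w μ :=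
  Set.exists_max_image {μ | I.IsMatching μ} (weightSum w) (Set.toFinite _) ⟨∅, isMatching_empty⟩

end Matchings

section Ranks

theorem strictPref_irrefl : ¬ I.strictPref i h h :=
  fun hp => hp.2 hp.1

theorem edgeRank_mem_Icc (e : Fin n × Fin n) : I.edgeRank e ∈ Set.Icc 1 n := by
  refine ⟨Nat.le_add_left 1 _, ?_⟩
  have hssub : {h ∈ I.accept e.1 | I.strictPref e.1 h e.2} ⊂ univ :=
    ssubset_univ_iff.2 fun heq => strictPref_irrefl (mem_filter.1 (eq_univ_iff_forall.1 heq e.2)).2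
  exact (card_lt_card hssub).trans_eq (card_fin n)

theorem filter_strictPref_subset (hh : h ∈ I.accept i) (hh' : h' ∈ I.accept i)
    (hp : I.pref i h' h) :
    {x ∈ I.accept i | I.strictPref i x h'} ⊆ {x ∈ I.accept i | I.strictPref i x h} := by
  intro x hx
  obtain ⟨hxa, hxh', hh'x⟩ := mem_filter.1 hx
  exact mem_filter.2 ⟨hxa, I.pref_trans i x h' h hxa hh' hh hxh' hp,
    fun hhx => hh'x (I.pref_trans i h' h x hh' hh hxa hp hhx)⟩

theorem edgeRank_le_of_pref (hh : h ∈ I.accept i) (hh' : h' ∈ I.accept i) (hp : I.pref i h' h) :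
    I.edgeRank (i, h') ≤ I.edgeRank (i, h) :=
  Nat.succ_le_succ (card_le_card (filter_strictPref_subset hh hh' hp))

theorem edgeRank_lt_of_strictPref (hh : h ∈ I.accept i) (hh' : h' ∈ I.accept i)
    (hp : I.strictPref i h' h) : I.edgeRank (i, h') < I.edgeRank (i, h) := by
  refine Nat.succ_lt_succ (card_lt_card ?_)
  exact (ssubset_iff_of_subset (filter_strictPref_subset hh hh' hp.1)).2
    ⟨h', mem_filter.2 ⟨hh', hp⟩, fun hmem => strictPref_irrefl (mem_filter.1 hmem).2⟩

end Ranks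

section AgentWeight

variable {w : Fin n × Fin n → ℝ}

/-- The share of agent `i` in the weight of `μ`: the total weight of the edges of `μ` at `i`, which
is `0` if `i` is unmatched. It turns Pareto comparisons, made agent by agent, into comparisons of
total weights. -/
def agentWeight (w : Fin n × Fin n → ℝ) (μ : Finset (Fin n × Fin n)) (i : Fin n) : ℝ :=
  ∑ e ∈ μ with e.1 = i, w e

theorem sum_agentWeight (w : Fin n × Fin n → ℝ) (μ : Finset (Fin n × Fin n)) :
    ∑ i, agentWeight w μ i = weightSum w μ :=
  sum_fiberwise μ Prod.fst w

theorem Unmatched.agentWeight_eq_zero (hi : I.Unmatched μ i) (w : Fin n × Fin n → ℝ) :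
    agentWeight w μ i = 0 := by
  refine sum_eq_zero fun e he => ?_
  obtain ⟨heμ, rfl⟩ := mem_filter.1 he
  exact absurd heμ (hi e.2)

theorem IsMatching.agentWeight_eq (hμ : I.IsMatching μ) (hh : (i, h) ∈ μ)
    (w : Fin n × Fin n → ℝ) : agentWeight w μ i = w (i, h) := by
  have hfiber : ({e ∈ μ | e.1 = i} : Finset (Fin n × Fin n)) = {(i, h)} :=
    eq_singleton_iff_unique_mem.2 ⟨mem_filter.2 ⟨hh, rfl⟩, fun e he =>
      hμ.injOn_fst (mem_filter.1 he).1 hh (mem_filter.1 he).2⟩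
  rw [agentWeight, hfiber, sum_singleton]

theorem WeakImprove.agentWeight_le (hi : I.WeakImprove μ' μ i) (hμ : I.IsMatching μ)
    (hμ' : I.IsMatching μ') (hnonneg : ∀ i, ∀ h ∈ I.accept i, 0 ≤ w (i, h))
    (hmono : ∀ i, ∀ h ∈ I.accept i, ∀ h' ∈ I.accept i, I.pref i h' h → w (i, h) ≤ w (i, h')) :
    agentWeight w μ i ≤ agentWeight w μ' i := by
  rcases hi with hu | ⟨h, h', hh, hh', hp⟩
  · rw [hu.agentWeight_eq_zero]
    exact sum_nonneg fun e he => hnonneg e.1 e.2 (hμ'.1 e (mem_filter.1 he).1)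
  · rw [hμ.agentWeight_eq hh, hμ'.agentWeight_eq hh']
    exact hmono i h (hμ.1 _ hh) h' (hμ'.1 _ hh') hp

theorem StrictImprove.agentWeight_lt (hi : I.StrictImprove μ' μ i) (hμ : I.IsMatching μ)
    (hμ' : I.IsMatching μ') (hpos : ∀ i, ∀ h ∈ I.accept i, 0 < w (i, h))
    (hstrict : ∀ i, ∀ h ∈ I.accept i, ∀ h' ∈ I.accept i,
      I.strictPref i h' h → w (i, h) < w (i, h')) :
    agentWeight w μ i < agentWeight w μ' i := by
  rcases hi with ⟨hu, h', hh'⟩ | ⟨h, h', hh, hh', hp⟩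
  · rw [hu.agentWeight_eq_zero, hμ'.agentWeight_eq hh']
    exact hpos i h' (hμ'.1 _ hh')
  · rw [hμ.agentWeight_eq hh, hμ'.agentWeight_eq hh']
    exact hstrict i h (hμ.1 _ hh) h' (hμ'.1 _ hh') hp

theorem IsMaxWeightMatching.paretoOptimal (hμ : I.IsMaxWeightMatching w μ)
    (hpos : ∀ i, ∀ h ∈ I.accept i, 0 < w (i, h))
    (hmono : ∀ i, ∀ h ∈ I.accept i, ∀ h' ∈ I.accept i, I.pref i h' h → w (i, h) ≤ w (i, h'))
    (hstrict : ∀ i, ∀ h ∈ I.accept i, ∀ h' ∈ I.accept i,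
      I.strictPref i h' h → w (i, h) < w (i, h')) :
    I.ParetoOptimal μ := by
  refine ⟨hμ.1, ?_⟩
  rintro ⟨μ', hμ', hweak, i₀, hi₀⟩
  have hlt : ∑ i, agentWeight w μ i < ∑ i, agentWeight w μ' i :=
    sum_lt_sum
      (fun i _ => (hweak i).agentWeight_le hμ.1 hμ' (fun i h hh => (hpos i h hh).le) hmono)
      ⟨i₀, mem_univ i₀, hi₀.agentWeight_lt hμ.1 hμ' hpos hstrict⟩
  rw [sum_agentWeight, sum_agentWeight] at hlt
  exact hlt.not_ge (hμ.2 μ' hμ')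

theorem IsPriorityMatching.paretoOptimal {p : ℕ → ℝ} (hμ : I.IsPriorityMatching p μ)
    (hpos : ∀ r ∈ Set.Icc 1 n, 0 < p r) (hanti : StrictAntiOn p (Set.Icc 1 n)) :
    I.ParetoOptimal μ :=
  IsMaxWeightMatching.paretoOptimal hμ (fun _ _ _ => hpos _ (edgeRank_mem_Icc _))
    (fun _ _ hh _ hh' hp => hanti.antitoneOn (edgeRank_mem_Icc _) (edgeRank_mem_Icc _)
      (edgeRank_le_of_pref hh hh' hp))
    (fun _ _ hh _ hh' hp => hanti (edgeRank_mem_Icc _) (edgeRank_mem_Icc _)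
      (edgeRank_lt_of_strictPref hh hh' hp))

variable (I) in
theorem exists_paretoOptimal : ∃ μ, I.ParetoOptimal μ := by
  let p : ℕ → ℝ := fun r => 2⁻¹ ^ r
  have hanti : StrictAnti p := pow_right_strictAnti₀ (by norm_num) (by norm_num)
  obtain ⟨μ, hμ⟩ := I.exists_isMaxWeightMatching fun e => p (I.edgeRank e)
  have hμp : I.IsPriorityMatching p μ := hμ
  exact ⟨μ, hμp.paretoOptimal (fun r _ => by positivity) (hanti.strictAntiOn _)⟩

end AgentWeight

section Trades

variable {S : Set (Fin n)} {t : Fin n → Fin n}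

/-- The agents of `S` can simultaneously move to their targets `t i` in `μ`: the targets are
distinct, and each of them is either free or held by a member of `S`. Trading cycles are the main
example; a single agent with a free target is another. -/
def IsTradingSet (μ : Finset (Fin n × Fin n)) (t : Fin n → Fin n) (S : Set (Fin n)) : Prop :=
  Set.InjOn t S ∧ ∀ i ∈ S, ∀ j, (j, t i) ∈ μ → j ∈ S

/-- The set of edges obtained from `μ` when every agent `i ∈ S` gives up their object and
receives `t i` instead. -/
noncomputable def reassign (μ : Finset (Fin n × Fin n)) (t : Fin n → Fin n) (S : Set (Fin n)) :
    Finset (Fin n × Fin n) :=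
  {e | (e ∈ μ ∧ e.1 ∉ S) ∨ (e.1 ∈ S ∧ e.2 = t e.1)}

theorem mem_reassign :
    (i, h) ∈ reassign μ t S ↔ ((i, h) ∈ μ ∧ i ∉ S) ∨ (i ∈ S ∧ h = t i) := by
  simp [reassign]

theorem mem_reassign_of_mem (hi : i ∈ S) : (i, t i) ∈ reassign μ t S :=
  mem_reassign.2 (.inr ⟨hi, rfl⟩)

theorem mem_reassign_of_notMem (hh : (i, h) ∈ μ) (hi : i ∉ S) : (i, h) ∈ reassign μ t S :=
  mem_reassign.2 (.inl ⟨hh, hi⟩)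

theorem IsMatching.reassign (hμ : I.IsMatching μ) (hS : IsTradingSet μ t S)
    (hacc : ∀ i ∈ S, t i ∈ I.accept i) : I.IsMatching (reassign μ t S) := by
  refine ⟨?_, ?_, ?_⟩
  · rintro ⟨i, h⟩ he
    rcases mem_reassign.1 he with ⟨he, -⟩ | ⟨hi, rfl⟩
    · exact hμ.1 _ he
    · exact hacc i hi
  · rintro ⟨i, h⟩ he ⟨j, k⟩ he' (rfl : i = j)
    rcases mem_reassign.1 he with ⟨he, hi⟩ | ⟨hi, rfl⟩ <;>
      rcases mem_reassign.1 he' with ⟨he', hi'⟩ | ⟨hi', rfl⟩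
    · exact hμ.injOn_fst he he' rfl
    · exact absurd hi' hi
    · exact absurd hi hi'
    · rfl
  · rintro ⟨i, h⟩ he ⟨j, k⟩ he' (rfl : h = k)
    rcases mem_reassign.1 he with ⟨he, hi⟩ | ⟨hi, hti⟩ <;>
      rcases mem_reassign.1 he' with ⟨he', hj⟩ | ⟨hj, htj⟩
    · exact hμ.injOn_snd he he' rfl
    · exact absurd (hS.2 j hj i (htj ▸ he)) hi
    · exact absurd (hS.2 i hi j (hti ▸ he')) hj
    · rw [hS.1 hi hj (hti.symm.trans htj)]

theorem weakImprove_reassign (hμ : I.IsMatching μ)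
    (hpref : ∀ i ∈ S, ∀ h, (i, h) ∈ μ → I.pref i (t i) h) (i : Fin n) :
    I.WeakImprove (reassign μ t S) μ i := by
  rcases I.unmatched_or_exists_mem μ i with hu | ⟨h, hh⟩
  · exact .inl hu
  by_cases hi : i ∈ S
  · exact .inr ⟨h, t i, hh, mem_reassign_of_mem hi, hpref i hi h hh⟩
  · exact .inr ⟨h, h, hh, mem_reassign_of_notMem hh hi, I.pref_refl i h (hμ.1 _ hh)⟩

theorem strictImprove_reassign (hi : i ∈ S) (hstrict : ∀ h, (i, h) ∈ μ → I.strictPref i (t i) h) :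
    I.StrictImprove (reassign μ t S) μ i := by
  rcases I.unmatched_or_exists_mem μ i with hu | ⟨h, hh⟩
  · exact .inl ⟨hu, t i, mem_reassign_of_mem hi⟩
  · exact .inr ⟨h, t i, hh, mem_reassign_of_mem hi, hstrict h hh⟩

theorem ParetoOptimal.exists_not_strictPref_of_isTradingSet (hμ : I.ParetoOptimal μ)
    (hS : IsTradingSet μ t S) (hacc : ∀ i ∈ S, t i ∈ I.accept i)
    (hpref : ∀ i ∈ S, ∀ h, (i, h) ∈ μ → I.pref i (t i) h) (hi : i ∈ S) :
    ∃ h, (i, h) ∈ μ ∧ ¬ I.strictPref i (t i) h := by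
  by_contra! hstrict
  exact hμ.2 ⟨reassign μ t S, hμ.1.reassign hS hacc, weakImprove_reassign hμ.1 hpref, i,
    strictImprove_reassign hi hstrict⟩

theorem IsMatching.exists_isTradingSet (hn : 0 < n) (hμ : I.IsMatching μ) (t : Fin n → Fin n) :
    ∃ S : Set (Fin n), S.Nonempty ∧ IsTradingSet μ t S := by
  by_cases hfree : ∃ i, ∀ j, (j, t i) ∉ μ
  · obtain ⟨i, hi⟩ := hfree
    refine ⟨{i}, Set.singleton_nonempty i, Set.injOn_singleton t i, ?_⟩
    rintro _ rfl j hj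
    exact absurd hj (hi j)
  · push Not at hfree
    choose owner howner using hfree
    have owner_unique {i j k : Fin n} (hk : (k, t j) ∈ μ) (hij : t i = t j) : k = owner i :=
      congrArg Prod.fst (hμ.injOn_snd hk (howner i) hij.symm)
    have : Nonempty (Fin n) := ⟨⟨0, hn⟩⟩
    have hbij := Function.bijOn_periodicPts owner
    refine ⟨Function.periodicPts owner, periodicPts_nonempty owner, fun i hi j hj hij => ?_,
      fun i hi j hj => ?_⟩
    · exact hbij.injOn hi hj (owner_unique (howner j) hij).symm
    · rw [owner_unique hj rfl]
      exact hbij.mapsTo hi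

theorem ParetoOptimal.exists_not_strictPref (hn : 0 < n) (hμ : I.ParetoOptimal μ)
    (hacc : ∀ i, t i ∈ I.accept i) : ∃ e ∈ μ, ¬ I.strictPref e.1 (t e.1) e.2 := by
  by_contra! hstrict
  obtain ⟨S, ⟨i, hi⟩, hS⟩ := hμ.1.exists_isTradingSet hn t
  obtain ⟨h, hh, hnot⟩ := hμ.exists_not_strictPref_of_isTradingSet hS (fun i _ => hacc i)
    (fun i _ h hh => (hstrict (i, h) hh).1) hi
  exact hnot (hstrict (i, h) hh)

end Trades

section Welfare

theorem Consistent.strictPref_of_lt (hv : I.Consistent v) (hh : h ∈ I.accept i)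
    (hh' : h' ∈ I.accept i) (hlt : v i h < v i h') : I.strictPref i h' h :=
  ⟨(hv.2.2 i h' h hh' hh).2 hlt.le, fun hp => hlt.not_ge ((hv.2.2 i h h' hh hh').1 hp)⟩

theorem ParetoOptimal.exists_value_eq_one (hn : 0 < n) (hμ : I.ParetoOptimal μ)
    (hv : I.Consistent v) (htop : ∀ i, ∃ h ∈ I.accept i, v i h = 1) :
    ∃ e ∈ μ, v e.1 e.2 = 1 := by
  choose top htop_mem htop_value using htop
  obtain ⟨⟨i, h⟩, hh, hnot⟩ := hμ.exists_not_strictPref hn htop_mem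
  refine ⟨(i, h), hh, (hv.1 i h).2.antisymm ?_⟩
  rw [← htop_value i]
  exact not_lt.1 fun hlt => hnot (hv.strictPref_of_lt (hμ.1.1 _ hh) (htop_mem i) hlt)

theorem ParetoOptimal.one_le_SW (hn : 0 < n) (hμ : I.ParetoOptimal μ) (hv : I.Consistent v)
    (htop : ∀ i, ∃ h ∈ I.accept i, v i h = 1) : 1 ≤ I.SW v μ := by
  obtain ⟨e, he, hve⟩ := hμ.exists_value_eq_one hn hv htop
  rw [← hve]
  exact single_le_sum (f := fun e : Fin n × Fin n => v e.1 e.2) (fun e _ => (hv.1 e.1 e.2).1) he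

theorem IsMatching.SW_le_two_mul_sqrt_mul_SW (hn : 0 < n) (hμ' : I.IsMatching μ')
    (hv : ∀ i h, 0 ≤ v i h ∧ v i h ≤ 1) (hone : 1 ≤ I.SW v μ)
    (hcard : #{e ∈ μ' | 1 / √n ≤ v e.1 e.2} ≤ #{e ∈ μ | 1 / √n ≤ v e.1 e.2}) :
    I.SW v μ' ≤ 2 * √n * I.SW v μ := by
  have hsqrt : 0 < √(n : ℝ) := Real.sqrt_pos.2 (Nat.cast_pos.2 hn)
  calc I.SW v μ'
      ≤ #{e ∈ μ' | 1 / √n ≤ v e.1 e.2} + #μ' * (1 / √n) :=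
        sum_le_card_filter_add_card_mul (by positivity) fun e _ => (hv e.1 e.2).2
    _ ≤ #{e ∈ μ | 1 / √n ≤ v e.1 e.2} + n * (1 / √n) := by
        gcongr
        exact hμ'.card_le
    _ = √n * (#{e ∈ μ | 1 / √n ≤ v e.1 e.2} * (1 / √n)) + √n * 1 := by
        rw [mul_one_div (n : ℝ), Real.div_sqrt]
        field_simp
    _ ≤ √n * I.SW v μ + √n * I.SW v μ := by
        gcongr
        exact card_filter_mul_le_sum (fun e _ => (hv e.1 e.2).1) _
    _ = 2 * √n * I.SW v μ := by ring

end Welfare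

end OSMInstance

section PriorityVectors

variable {n : ℕ} {p : ℕ → ℝ}

theorem pos_of_mem_prioritySet (hp : p ∈ PrioritySet n) : ∀ r ∈ Set.Icc 1 n, 0 < p r := by
  rintro r ⟨hr, hrn⟩
  have hn : (1 : ℝ) ≤ n := by exact_mod_cast hr.trans hrn
  rcases hp with rfl | rfl | rfl
  · simp only [pRankMaximal]
    positivity
  · simp only [pMaxCardRankMaximal]
    positivity
  · have hle : (n : ℝ) ^ (r - 1) ≤ (n : ℝ) ^ (2 * n) := pow_le_pow_right₀ hn (by lia)
    have hpos : 0 < (n : ℝ) ^ (2 * n) := by positivity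
    simp only [pFairVec]
    linarith

theorem strictAntiOn_of_mem_prioritySet (hp : p ∈ PrioritySet n) :
    StrictAntiOn p (Set.Icc 1 n) := by
  rintro r ⟨hr, -⟩ s ⟨-, hsn⟩ hrs
  have hn : (1 : ℝ) < n := by exact_mod_cast (hr.trans_lt hrs).trans_le hsn
  rcases hp with rfl | rfl | rfl
  · exact pow_lt_pow_right₀ hn (by lia)
  · exact add_lt_add_right (pow_lt_pow_right₀ hn (by lia)) _
  · have hlt : (n : ℝ) ^ (r - 1) < (n : ℝ) ^ (s - 1) := pow_lt_pow_right₀ hn (by lia)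
    simp only [pFairVec]
    linarith

end PriorityVectors

theorem nonadaptive_unitRange_upper_bound_general {n : ℕ} (hn : 0 < n) (I : OSMInstance n)
    (P : Finset (Fin n × Fin n) → Prop) (hP : ∀ μ, P μ → I.ParetoOptimal μ) (hne : ∃ μ, P μ) :
    ∃ T : Fin n → Fin n → ℝ, (∀ i j, 0 ≤ T i j ∧ T i j ≤ 1) ∧
      ∃ f : (Fin n → Fin n → Bool) → Finset (Fin n × Fin n), (∀ b, P (f b)) ∧
        ∀ v : Fin n → Fin n → ℝ, I.Consistent v → (∀ i, ∃ h ∈ I.accept i, v i h = 1) →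
          ∀ μstar, P μstar →
            I.SW v μstar ≤ 2 * √n * I.SW v (f (fun i j => decide (T i j ≤ v i j))) := by
  have hmax : ∀ b : Fin n → Fin n → Bool, ∃ μ, P μ ∧ ∀ μ', P μ' →
      #{e ∈ μ' | b e.1 e.2 = true} ≤ #{e ∈ μ | b e.1 e.2 = true} := fun b =>
    Set.exists_max_image {μ | P μ} _ (Set.toFinite _) hne
  choose f hfP hfmax using hmax
  have hsqrt : (1 : ℝ) ≤ √n := Real.one_le_sqrt.2 (Nat.one_le_cast.2 hn)
  refine ⟨fun _ _ => 1 / √n, fun _ _ => ⟨by positivity, div_le_one_of_le₀ hsqrt (by positivity)⟩,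
    f, hfP, fun v hv htop μstar hstar => ?_⟩
  refine (hP _ hstar).1.SW_le_two_mul_sqrt_mul_SW hn hv.1
    ((hP _ (hfP _)).one_le_SW hn hv htop) ?_
  simpa only [decide_eq_true_eq] using hfmax (fun i j => decide (1 / √n ≤ v i j)) μstar hstar

/-- for unit-range valuations there are non-adaptive deterministic
algorithms asking one binary threshold query per (agent, object) pair that output (i) a
Pareto optimal matching, respectively (ii) a priority-`p` matching for any `p ∈ 𝕡`,
achieving an `O(√n)`-approximation to the optimal welfare among matchings of the
respective kind. -/
theorem nonadaptive_unitRange_upper_bound :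
    ∃ C : ℝ, 0 < C ∧ ∀ n : ℕ, 2 ≤ n → ∀ I : OSMInstance n,
      (∃ T : Fin n → Fin n → ℝ, (∀ i j, 0 ≤ T i j ∧ T i j ≤ 1) ∧
        ∃ f : (Fin n → Fin n → Bool) → Finset (Fin n × Fin n),
          (∀ b, I.IsMatching (f b)) ∧
          ∀ v : Fin n → Fin n → ℝ, I.Consistent v → I.UnitRange v →
            I.ParetoOptimal (f (fun i j => decide (T i j ≤ v i j))) ∧
            ∀ μstar, I.ParetoOptimal μstar →
              I.SW v μstar ≤
                C * Real.sqrt n * I.SW v (f (fun i j => decide (T i j ≤ v i j)))) ∧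
      (∀ p ∈ PrioritySet n,
        ∃ T : Fin n → Fin n → ℝ, (∀ i j, 0 ≤ T i j ∧ T i j ≤ 1) ∧
        ∃ f : (Fin n → Fin n → Bool) → Finset (Fin n × Fin n),
          (∀ b, I.IsMatching (f b)) ∧
          ∀ v : Fin n → Fin n → ℝ, I.Consistent v → I.UnitRange v →
            I.IsPriorityMatching p (f (fun i j => decide (T i j ≤ v i j))) ∧
            ∀ μstar, I.IsPriorityMatching p μstar →
              I.SW v μstar ≤
                C * Real.sqrt n * I.SW v (f (fun i j => decide (T i j ≤ v i j)))) := by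
  refine ⟨2, two_pos, fun n hn I => ⟨?_, fun p hp => ?_⟩⟩
  · obtain ⟨T, hT, f, hf, hfSW⟩ := nonadaptive_unitRange_upper_bound_general (by lia) I
      I.ParetoOptimal (fun _ => id) I.exists_paretoOptimal
    exact ⟨T, hT, f, fun b => (hf b).1, fun v hv hur => ⟨hf _, hfSW v hv fun i => (hur i).1⟩⟩
  · obtain ⟨T, hT, f, hf, hfSW⟩ := nonadaptive_unitRange_upper_bound_general (by lia) I
      (I.IsPriorityMatching p)
      (fun _ hμ =>
        hμ.paretoOptimal (pos_of_mem_prioritySet hp) (strictAntiOn_of_mem_prioritySet hp))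
      (I.exists_isMaxWeightMatching _)
    exact ⟨T, hT, f, fun b => (hf b).1, fun v hv hur => ⟨hf _, hfSW v hv fun i => (hur i).1⟩⟩
end
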